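/- arXiv:1502.03088 — 4 statements merged into one kernel-verified Lean document; each statement's English description precedes it below -/
import Mathlib

section
/- Let (Ω, μ) be a measure space, let l ≥ 1, ε ≥ 0, and let g_1, …, g_l and h be probability densities on Ω (nonnegative measurable functions with integral 1) satisfying ∫|g_i − h| dμ ≥ 2 − ε for every i = 1, …, l. Then for every probability distribution (p_1, …, p_l) one has ∫|Σ_{i=1}^l p_i g_i − h| dμ ≥ 2 − lε. -/
open MeasureTheory

/-!
For `a, b ≥ 0` one has `|a - b| = a + b - 2 min a b`, so `∫|gᵢ - h| ≥ 2 - ε` says that the overlap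
`2 ∫ min gᵢ h` is at most `ε`. The overlap of a mixture is at most the sum of the overlaps of its
components: `min (∑ pᵢ gᵢ) h ≤ ∑ min gᵢ h` pointwise, which only uses `0 ≤ pᵢ ≤ 1`. Integrating this
inequality gives the theorem. Below `2 min a b` is written as `a + b - |a - b|`, so that only
integrals of `gᵢ`, `h` and `|gᵢ - h|` occur.
-/

/-- The inequality `2 min (∑ pᵢ aᵢ) b ≤ ∑ 2 min aᵢ b`, with `2 min x y` written as
`x + y - |x - y|`. -/
lemma mixture_overlap_le {ι : Type*} [Fintype ι] (p a : ι → ℝ) (b : ℝ)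
    (hp : ∀ i, p i ≤ 1) (ha : ∀ i, 0 ≤ a i) (hb : 0 ≤ b) :
    (∑ i, p i * a i) + b - ∑ i, (a i + b - |a i - b|) ≤ |(∑ i, p i * a i) - b| := by
  have hnonneg : ∀ i ∈ Finset.univ, 0 ≤ a i + b - |a i - b| := fun i _ ↦ by
    have : |a i - b| ≤ a i + b := abs_le.2 ⟨by linarith [ha i], by linarith [ha i]⟩
    linarith
  by_cases hex : ∃ i, b ≤ a i
  · -- A single component with `b ≤ aᵢ` already contributes `2 b`.
    obtain ⟨i, hi⟩ := hex
    have h1 := Finset.single_le_sum hnonneg (Finset.mem_univ i)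
    rw [abs_of_nonneg (sub_nonneg.2 hi)] at h1
    linarith [le_abs_self ((∑ i, p i * a i) - b)]
  · -- Otherwise every component contributes `2 aᵢ ≥ 2 pᵢ aᵢ`.
    push Not at hex
    have h1 : ∑ i, 2 * (p i * a i) ≤ ∑ i, (a i + b - |a i - b|) := by
      refine Finset.sum_le_sum fun i _ ↦ ?_
      rw [abs_of_neg (sub_neg.2 (hex i))]
      linarith [mul_le_of_le_one_left (ha i) (hp i)]
    rw [← Finset.mul_sum] at h1
    linarith [neg_abs_le ((∑ i, p i * a i) - b)]

/-- Classical reverse triangle inequality for probability densities: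
if `∫|gᵢ - h| ≥ 2 - ε` for all `i`, then `∫|Σ pᵢ gᵢ - h| ≥ 2 - lε`. -/
theorem reverse_triangle_classical {Ω : Type*} [MeasurableSpace Ω] (μ : Measure Ω)
    (l : ℕ) (hl : 1 ≤ l) (ε : ℝ) (hε : 0 ≤ ε)
    (g : Fin l → Ω → ℝ) (h : Ω → ℝ)
    (hg_meas : ∀ i, Measurable (g i)) (hh_meas : Measurable h)
    (hg_int : ∀ i, Integrable (g i) μ) (hh_int : Integrable h μ)
    (hg_nonneg : ∀ i x, 0 ≤ g i x) (hh_nonneg : ∀ x, 0 ≤ h x)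
    (hg_one : ∀ i, ∫ x, g i x ∂μ = 1) (hh_one : ∫ x, h x ∂μ = 1)
    (hfar : ∀ i, 2 - ε ≤ ∫ x, |g i x - h x| ∂μ)
    (p : Fin l → ℝ) (hp : ∀ i, 0 ≤ p i) (hpsum : ∑ i, p i = 1) :
    2 - l * ε ≤ ∫ x, |(∑ i, p i * g i x) - h x| ∂μ := by
  have hp1 : ∀ i, p i ≤ 1 := fun i ↦
    hpsum ▸ Finset.single_le_sum (fun j _ ↦ hp j) (Finset.mem_univ i)
  have hmix : Integrable (fun x ↦ ∑ i, p i * g i x) μ :=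
    integrable_finsetSum _ fun i _ ↦ (hg_int i).const_mul _
  have habs : ∀ i, Integrable (fun x ↦ |g i x - h x|) μ := fun i ↦ ((hg_int i).sub hh_int).abs
  have hadd : ∀ i, Integrable (fun x ↦ g i x + h x) μ := fun i ↦ (hg_int i).add hh_int
  have hov : ∀ i, Integrable (fun x ↦ g i x + h x - |g i x - h x|) μ := fun i ↦
    (hadd i).sub (habs i)
  have hovs : Integrable (fun x ↦ ∑ i, (g i x + h x - |g i x - h x|)) μ :=
    integrable_finsetSum _ fun i _ ↦ hov i
  have hmixh : Integrable (fun x ↦ (∑ i, p i * g i x) + h x) μ := hmix.add hh_int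
  have hmono := integral_mono (hmixh.sub hovs) (hmix.sub hh_int).abs fun x ↦
    mixture_overlap_le p (fun i ↦ g i x) (h x) hp1 (fun i ↦ hg_nonneg i x) (hh_nonneg x)
  have hmix_one : ∫ x, ∑ i, p i * g i x ∂μ = 1 := by
    rw [integral_finsetSum _ fun i _ ↦ (hg_int i).const_mul _]
    simp [integral_const_mul, hg_one, hpsum]
  have hov_le : ∫ x, ∑ i, (g i x + h x - |g i x - h x|) ∂μ ≤ l * ε := by
    rw [integral_finsetSum _ fun i _ ↦ hov i]
    calc ∑ i, ∫ x, (g i x + h x - |g i x - h x|) ∂μ ≤ ∑ _i : Fin l, ε := by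
          refine Finset.sum_le_sum fun i _ ↦ ?_
          rw [integral_sub (hadd i) (habs i), integral_add (hg_int i) hh_int, hg_one, hh_one]
          linarith [hfar i]
      _ = l * ε := by simp
  have hlhs : ∫ x, ((∑ i, p i * g i x) + h x - ∑ i, (g i x + h x - |g i x - h x|)) ∂μ
      = 2 - ∫ x, ∑ i, (g i x + h x - |g i x - h x|) ∂μ := by
    rw [integral_sub hmixh hovs, integral_add hmix hh_int, hmix_one, hh_one]
    norm_num
  calc 2 - l * ε ≤ 2 - ∫ x, ∑ i, (g i x + h x - |g i x - h x|) ∂μ := by linarith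
    _ ≤ _ := hlhs ▸ hmono
end

section
/- Let P = {p(a,b|x,y)} be a box with input sets X, Y and outcome sets A, B, let 0 ≤ c ≤ 1, and suppose there exist functions a_0: X→A and b_0: Y→B such that p(a_0(x), b_0(y)|x,y) ≥ c for all x ∈ X, y ∈ Y. Then for every real coefficient family s(a,b,x,y), the Bell functional satisfies β(P) ≤ β_alg^max − c(β_alg^max − β_det^max). -/
/-!
Subtracting from `P` the `c`-fold multiple of the deterministic box `D = detBox a₀ b₀` leaves a
nonnegative family whose entries sum to `1 - c` for each pair of inputs, that is, `1 - c` times a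
box. By linearity `β(P) = c β(D) + β(P - c D)`. The first term is at most `c β_det^max`, the second
at most `(1 - c) β_alg^max` (`bell_le_mul_bellAlgMax`), and the sum of these is the claimed bound.
As both maxima are real suprema, the sets of attained values also have to be bounded above: over
boxes by `∑ |s|`, over deterministic boxes because there are finitely many of them.
-/

/-- A box: a family of probability distributions `p(a,b|x,y)`. -/
def IsBox {X Y A B : Type*} [Fintype A] [Fintype B]
    (P : X → Y → A → B → ℝ) : Prop :=
  (∀ x y a b, 0 ≤ P x y a b) ∧ ∀ x y, (∑ a, ∑ b, P x y a b) = 1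

/-- The deterministic box given by response functions `f` (Alice) and `g` (Bob). -/
def detBox {X Y A B : Type*} [DecidableEq A] [DecidableEq B]
    (f : X → A) (g : Y → B) : X → Y → A → B → ℝ :=
  fun x y a b => if a = f x ∧ b = g y then 1 else 0

/-- The Bell functional `β(P) = Σ s(a,b,x,y) p(a,b|x,y)`. -/
def bell {X Y A B : Type*} [Fintype X] [Fintype Y] [Fintype A] [Fintype B]
    (s : X → Y → A → B → ℝ) (P : X → Y → A → B → ℝ) : ℝ :=
  ∑ x, ∑ y, ∑ a, ∑ b, s x y a b * P x y a b

/-- `β_alg^max`: the supremum of the Bell functional over all boxes. -/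
noncomputable def bellAlgMax {X Y A B : Type*} [Fintype X] [Fintype Y] [Fintype A] [Fintype B]
    (s : X → Y → A → B → ℝ) : ℝ :=
  sSup {r : ℝ | ∃ Q, IsBox Q ∧ bell s Q = r}

/-- `β_det^max`: the supremum of the Bell functional over all deterministic boxes. -/
noncomputable def bellDetMax {X Y A B : Type*} [Fintype X] [Fintype Y] [Fintype A] [Fintype B]
    [DecidableEq A] [DecidableEq B] (s : X → Y → A → B → ℝ) : ℝ :=
  sSup {r : ℝ | ∃ f g, bell s (detBox f g) = r}

theorem isBox_detBox {X Y A B : Type*} [Fintype A] [Fintype B] [DecidableEq A] [DecidableEq B]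
    (f : X → A) (g : Y → B) : IsBox (detBox f g) := by
  refine ⟨fun x y a b => ?_, fun x y => ?_⟩
  · unfold detBox
    split_ifs <;> norm_num
  · simp [detBox, ite_and]

theorem IsBox.le_one {X Y A B : Type*} [Fintype A] [Fintype B]
    {P : X → Y → A → B → ℝ} (hP : IsBox P) (x : X) (y : Y) (a : A) (b : B) :
    P x y a b ≤ 1 := by
  rw [← hP.2 x y]
  calc P x y a b ≤ ∑ b', P x y a b' :=
        Finset.single_le_sum (f := fun b' => P x y a b') (fun b' _ => hP.1 x y a b')
          (Finset.mem_univ b)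
    _ ≤ ∑ a', ∑ b', P x y a' b' :=
        Finset.single_le_sum (f := fun a' => ∑ b', P x y a' b')
          (fun a' _ => Finset.sum_nonneg fun b' _ => hP.1 x y a' b') (Finset.mem_univ a)

theorem bell_le_bellAlgMax {X Y A B : Type*} [Fintype X] [Fintype Y] [Fintype A] [Fintype B]
    (s : X → Y → A → B → ℝ) {Q : X → Y → A → B → ℝ} (hQ : IsBox Q) :
    bell s Q ≤ bellAlgMax s := by
  refine le_csSup ⟨∑ x, ∑ y, ∑ a, ∑ b, |s x y a b|, ?_⟩ ⟨Q, hQ, rfl⟩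
  rintro _ ⟨R, hR, rfl⟩
  unfold bell
  gcongr with x _ y _ a _ b _
  calc s x y a b * R x y a b ≤ |s x y a b| * R x y a b :=
        mul_le_mul_of_nonneg_right (le_abs_self _) (hR.1 x y a b)
    _ ≤ |s x y a b| := mul_le_of_le_one_right (abs_nonneg _) (hR.le_one x y a b)

theorem bell_detBox_le_bellDetMax {X Y A B : Type*} [Fintype X] [Fintype Y] [Fintype A]
    [Fintype B] [DecidableEq A] [DecidableEq B]
    (s : X → Y → A → B → ℝ) (f : X → A) (g : Y → B) :
    bell s (detBox f g) ≤ bellDetMax s := by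
  refine le_csSup ?_ ⟨f, g, rfl⟩
  refine ((Set.finite_range fun h : (X → A) × (Y → B) => bell s (detBox h.1 h.2)).subset
    ?_).bddAbove
  rintro _ ⟨f', g', rfl⟩
  exact ⟨(f', g'), rfl⟩

theorem bell_add_smul {X Y A B : Type*} [Fintype X] [Fintype Y] [Fintype A] [Fintype B]
    (s P Q : X → Y → A → B → ℝ) (t : ℝ) :
    bell s (P + t • Q) = bell s P + t * bell s Q := by
  simp only [bell, Finset.mul_sum, ← Finset.sum_add_distrib, Pi.add_apply, Pi.smul_apply,
    smul_eq_mul]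
  refine Finset.sum_congr rfl fun x _ => Finset.sum_congr rfl fun y _ =>
    Finset.sum_congr rfl fun a _ => Finset.sum_congr rfl fun b _ => ?_
  ring

/-- The algebraic bound, extended homogeneously to nonnegative families of total weight `t`
for each pair of inputs. -/
theorem bell_le_mul_bellAlgMax {X Y A B : Type*} [Fintype X] [Fintype Y] [Fintype A] [Fintype B]
    (s R : X → Y → A → B → ℝ) {t : ℝ} (ht : 0 ≤ t) (hR : ∀ x y a b, 0 ≤ R x y a b)
    (hsum : ∀ x y, (∑ a, ∑ b, R x y a b) = t) :
    bell s R ≤ t * bellAlgMax s := by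
  rcases ht.eq_or_lt with rfl | ht
  -- A family of weight zero cannot be normalized to a box, but it vanishes identically.
  · have hzero : ∀ x y a b, R x y a b = 0 := fun x y a b => by
      have h := (Finset.sum_eq_zero_iff_of_nonneg fun a _ =>
        Finset.sum_nonneg fun b _ => hR x y a b).1 (hsum x y) a (Finset.mem_univ a)
      exact (Finset.sum_eq_zero_iff_of_nonneg fun b _ => hR x y a b).1 h b (Finset.mem_univ b)
    simp [bell, hzero]
  · have hbox : IsBox (t⁻¹ • R) := by
      refine ⟨fun x y a b => mul_nonneg (inv_nonneg.2 ht.le) (hR x y a b), fun x y => ?_⟩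
      simp only [Pi.smul_apply, smul_eq_mul, ← Finset.mul_sum, hsum]
      exact inv_mul_cancel₀ ht.ne'
    have hlin : bell s R = t * bell s (t⁻¹ • R) := by
      have h := bell_add_smul s 0 (t⁻¹ • R) t
      rw [smul_inv_smul₀ ht.ne', zero_add] at h
      simpa [bell] using h
    rw [hlin]
    exact mul_le_mul_of_nonneg_left (bell_le_bellAlgMax s hbox) ht.le

/-- If a box has a fraction `c` of determinism — i.e. `p(a₀(x), b₀(y)|x,y) ≥ c` for
some response functions `a₀, b₀` — then every Bell functional satisfies
`β(P) ≤ β_alg^max − c·(β_alg^max − β_det^max)`. -/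
theorem bell_bound_of_deterministic_fraction
    {X Y A B : Type*} [Fintype X] [Fintype Y] [Fintype A] [Fintype B]
    [DecidableEq A] [DecidableEq B] [Nonempty A] [Nonempty B]
    (P : X → Y → A → B → ℝ) (hP : IsBox P)
    (c : ℝ) (hc0 : 0 ≤ c) (hc1 : c ≤ 1)
    (a₀ : X → A) (b₀ : Y → B)
    (hdet : ∀ x y, c ≤ P x y (a₀ x) (b₀ y))
    (s : X → Y → A → B → ℝ) :
    bell s P ≤ bellAlgMax s - c * (bellAlgMax s - bellDetMax s) := by
  have hD := isBox_detBox a₀ b₀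
  have hrest : bell s (P + (-c) • detBox a₀ b₀) ≤ (1 - c) * bellAlgMax s := by
    refine bell_le_mul_bellAlgMax s _ (sub_nonneg.2 hc1) (fun x y a b => ?_) fun x y => ?_
    · by_cases h : a = a₀ x ∧ b = b₀ y
      · obtain ⟨rfl, rfl⟩ := h
        simpa [detBox] using hdet x y
      · simpa [detBox, h] using hP.1 x y a b
    · simp only [Pi.add_apply, Pi.smul_apply, smul_eq_mul, Finset.sum_add_distrib,
        ← Finset.mul_sum, hP.2, hD.2]
      ring
  rw [bell_add_smul] at hrest
  have hdetMax := mul_le_mul_of_nonneg_left (bell_detBox_le_bellDetMax s a₀ b₀) hc0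
  linarith
end

section
/- For all real numbers p₀, q₀ with 0 ≤ p₀ ≤ q₀ ≤ 1/2, one has max{ p₀/4 , 2(1 − q₀)(1 − q₀/(1 − p₀)) } ≥ (5 − √17)/8. -/
/-- For `0 ≤ p₀ ≤ q₀ ≤ 1/2`:
`max{p₀/4, 2(1 − q₀)(1 − q₀/(1 − p₀))} ≥ (5 − √17)/8`. -/
theorem fod_optimization (p₀ q₀ : ℝ) (h0 : 0 ≤ p₀) (h1 : p₀ ≤ q₀) (h2 : q₀ ≤ 1/2) :
    (5 - Real.sqrt 17) / 8 ≤ max (p₀ / 4) (2 * (1 - q₀) * (1 - q₀ / (1 - p₀))) := by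
  have hs : Real.sqrt 17 ^ 2 = 17 := Real.sq_sqrt (by norm_num)
  have hs0 : 0 ≤ Real.sqrt 17 := Real.sqrt_nonneg 17
  have hs5 : Real.sqrt 17 ≤ 5 := by nlinarith
  -- The two expressions balance at `p₀ = (5 - √17)/2`, `q₀ = 1/2`; the first increases in `p₀`,
  -- the second decreases in both variables.
  rcases le_total ((5 - Real.sqrt 17) / 2) p₀ with hp | hp
  · exact le_max_of_le_left (by linarith)
  · apply le_max_of_le_right
    -- `(√17 + 3)/8` is the value of `q₀ / (1 - p₀)` at the balance point.
    have hq : q₀ / (1 - p₀) ≤ (Real.sqrt 17 + 3) / 8 := by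
      rw [div_le_iff₀ (by linarith)]
      nlinarith
    nlinarith
end

section
/- For all real numbers p₀, q₀ with 0 ≤ p₀ ≤ q₀ ≤ 1/2, one has max{ 2(1 − q₀)(1 − q₀/(1 − p₀)) , q₀/4 } ≥ 0.1123. -/
/-- For `0 ≤ p₀ ≤ q₀ ≤ 1/2`:
`max{2(1 − q₀)(1 − q₀/(1 − p₀)), q₀/4} ≥ 0.1123`. -/
theorem cf_optimization (p₀ q₀ : ℝ) (h0 : 0 ≤ p₀) (h1 : p₀ ≤ q₀) (h2 : q₀ ≤ 1/2) :
    (0.1123 : ℝ) ≤ max (2 * (1 - q₀) * (1 - q₀ / (1 - p₀))) (q₀ / 4) := by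
  by_cases hq : (0.4492 : ℝ) ≤ q₀
  · exact le_max_of_le_right (by linarith)
  · push Not at hq
    apply le_max_of_le_left
    have hq1 : 0 < 1 - q₀ := by linarith
    -- The first expression decreases in `p₀`, so `p₀ = q₀` is the worst case,
    -- where it equals `2 * (1 - 2 * q₀)`.
    have h : q₀ / (1 - p₀) ≤ q₀ / (1 - q₀) :=
      div_le_div_of_nonneg_left (h0.trans h1) hq1 (by linarith)
    have hm : (1 - q₀) * (q₀ / (1 - p₀)) ≤ q₀ :=
      (mul_le_mul_of_nonneg_left h hq1.le).trans_eq (mul_div_cancel₀ q₀ hq1.ne')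
    linarith
end
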